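/- Let α be a countable ordinal, δ = ω^(α+1), X = [1, δ] with the order topology, G the group of homeomorphisms of X, A_n = [ω^α·(n−1)+1, ω^α·n] for n ≥ 1, and π : G → Sym({1,2,…}) the homomorphism determined by π(g)(m) = n iff g(ω^α·m) = ω^α·n. Then for all g, h ∈ G and every i ≥ 1, (P_i(hg), Q_i(hg)) ∼ (P_i(g), Q_i(g)) + (P_{π(g)(i)}(h), Q_{π(g)(i)}(h)), where P_n(g) = A_{π(g)(n)} \ g(A_n), Q_n(g) = A_n \ g⁻¹(A_{π(g)(n)}), and the sum of pairs is the pair of topological disjoint unions. -/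

import Mathlib

open Ordinal Topology

noncomputable section

/-- The ordinal interval `[1, γ]`, i.e. the set of ordinals `β` with `1 ≤ β ≤ γ`, with the
subspace topology induced from the order topology on `Ordinal` (equivalently, its order
topology, since it is order-connected). -/
abbrev OrdIcc (γ : Ordinal) : Type _ := ↥(Set.Icc (1 : Ordinal) γ)

/-- `X = [1, δ]` where `δ = ω^(α+1)`. -/
abbrev Xsp (α : Ordinal) : Type _ := OrdIcc (omega0 ^ (α + 1))

lemma omega_pow_mul_mem (α : Ordinal) (m : ℕ+) :
    omega0 ^ α * ((m : ℕ) : Ordinal) ∈ Set.Icc (1 : Ordinal) (omega0 ^ (α + 1)) := by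
  constructor
  · have h1 : (1 : Ordinal) ≤ omega0 ^ α := Order.one_le_iff_pos.2 (opow_pos _ omega0_pos)
    have h2 : (1 : Ordinal) ≤ ((m : ℕ) : Ordinal) := by exact_mod_cast m.one_le
    calc (1 : Ordinal) = 1 * 1 := (one_mul 1).symm
      _ ≤ omega0 ^ α * ((m : ℕ) : Ordinal) := mul_le_mul' h1 h2
  · rw [Ordinal.add_one_eq_succ, Ordinal.opow_succ]
    exact mul_le_mul' le_rfl (Ordinal.nat_lt_omega0 m).le

/-- The point `ω^α·m` of `X` (for `m ≥ 1`). -/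
def pt (α : Ordinal) (m : ℕ+) : Xsp α :=
  ⟨omega0 ^ α * ((m : ℕ) : Ordinal), omega_pow_mul_mem α m⟩

/-- `A_n = [ω^α·(n−1)+1, ω^α·n]`, as a subset of `X`. -/
def Ablock (α : Ordinal) (n : ℕ+) : Set (Xsp α) :=
  {x : Xsp α | (x : Ordinal) ∈
    Set.Icc (omega0 ^ α * (((n : ℕ) - 1 : ℕ) : Ordinal) + 1) (omega0 ^ α * ((n : ℕ) : Ordinal))}

/-- The defining property of the homomorphism `π : G → Sym({1,2,…})`:
`π(g)(m) = n` iff `g(ω^α·m) = ω^α·n`. -/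
def IsBlockPerm (α : Ordinal) (π : (Xsp α ≃ₜ Xsp α) → Equiv.Perm ℕ+) : Prop :=
  ∀ (g : Xsp α ≃ₜ Xsp α) (m : ℕ+), g (pt α m) = pt α (π g m)

/-- `P_i(g) = A_{π(g)(i)} \ g(A_i)`. -/
def Pset (α : Ordinal) (π : (Xsp α ≃ₜ Xsp α) → Equiv.Perm ℕ+)
    (g : Xsp α ≃ₜ Xsp α) (i : ℕ+) : Set (Xsp α) :=
  Ablock α (π g i) \ (⇑g '' Ablock α i)

/-- `Q_i(g) = A_i \ g⁻¹(A_{π(g)(i)})`. -/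
def Qset (α : Ordinal) (π : (Xsp α ≃ₜ Xsp α) → Equiv.Perm ℕ+)
    (g : Xsp α ≃ₜ Xsp α) (i : ℕ+) : Set (Xsp α) :=
  Ablock α i \ (⇑g ⁻¹' Ablock α (π g i))

/-- `(P₁, Q₁) ∼ (P₂, Q₂)` iff the topological disjoint union `P₁ ⊔ Q₂` is homeomorphic
to `P₂ ⊔ Q₁`. -/
def PairSim (P₁ Q₁ P₂ Q₂ : Type*) [TopologicalSpace P₁] [TopologicalSpace Q₁]
    [TopologicalSpace P₂] [TopologicalSpace Q₂] : Prop :=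
  Nonempty ((P₁ ⊕ Q₂) ≃ₜ (P₂ ⊕ Q₁))

/-! Pulling everything back along `g` and `hg` turns the three blocks `A_i`, `A_{π(g)(i)}`,
`A_{π(hg)(i)}` into clopen subsets `A`, `B`, `C` of one space. Each of the families
`C \ A, A \ B, B \ C` and `B \ A, C \ B, A \ C` then partitions `(A ∪ B ∪ C) \ (A ∩ B ∩ C)` into
clopen pieces, so both have the same topological disjoint union. -/

section Clopen

variable {β : Type*} [LinearOrder β] [TopologicalSpace β] [OrderClosedTopology β]
  [SuccOrder β]

lemma isClopen_Iic (a : β) : IsClopen (Set.Iic a) := by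
  refine ⟨isClosed_Iic, ?_⟩
  by_cases ha : IsMax a
  · exact ha.isTop.Iic_eq ▸ isOpen_univ
  · exact Order.Iio_succ_of_not_isMax ha ▸ isOpen_Iio

lemma isClopen_Ioc (a b : β) : IsClopen (Set.Ioc a b) := by
  rw [← Set.Ioi_inter_Iic, ← Set.compl_Iic]
  exact (isClopen_Iic a).compl.inter (isClopen_Iic b)

end Clopen

section Blocks

variable {α : Ordinal}

lemma isClopen_Ablock (n : ℕ+) : IsClopen (Ablock α n) := by
  change IsClopen (Subtype.val ⁻¹' Set.Icc _ _)
  rw [Set.Icc_add_one_left_eq_Ioc]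
  exact (isClopen_Ioc _ _).preimage continuous_subtype_val

lemma pt_injective : Function.Injective (pt α) := by
  intro m n hmn
  have hmul : omega0 ^ α * ((m : ℕ) : Ordinal) = omega0 ^ α * ((n : ℕ) : Ordinal) :=
    congrArg Subtype.val hmn
  have hcast := mul_left_cancel₀ (opow_pos α omega0_pos).ne' hmul
  exact PNat.coe_injective (Nat.cast_injective hcast)

lemma IsBlockPerm.trans_apply {π : (Xsp α ≃ₜ Xsp α) → Equiv.Perm ℕ+} (hπ : IsBlockPerm α π)
    (g h : Xsp α ≃ₜ Xsp α) (i : ℕ+) : π (g.trans h) i = π h (π g i) :=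
  pt_injective <| calc
    pt α (π (g.trans h) i) = h (g (pt α i)) := (hπ (g.trans h) i).symm
    _ = pt α (π h (π g i)) := by rw [hπ g, hπ h]

end Blocks

section PairSim

lemma PairSim.congr {P₁ Q₁ P₂ Q₂ P₁' Q₁' P₂' Q₂' : Type*}
    [TopologicalSpace P₁] [TopologicalSpace Q₁] [TopologicalSpace P₂] [TopologicalSpace Q₂]
    [TopologicalSpace P₁'] [TopologicalSpace Q₁'] [TopologicalSpace P₂'] [TopologicalSpace Q₂']
    (hs : PairSim P₁ Q₁ P₂ Q₂)
    (p₁ : P₁ ≃ₜ P₁') (q₁ : Q₁ ≃ₜ Q₁') (p₂ : P₂ ≃ₜ P₂') (q₂ : Q₂ ≃ₜ Q₂') :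
    PairSim P₁' Q₁' P₂' Q₂' :=
  hs.map fun e => (p₁.sumCongr q₂).symm.trans (e.trans (p₂.sumCongr q₁))

variable {X : Type*} [TopologicalSpace X]

/-- The canonical homeomorphism from the topological disjoint union of two disjoint open subsets
to their union, used to realise the disjoint unions of `PairSim` inside one space. -/
def sumHomeomorphUnion {S T : Set X} (hS : IsOpen S) (hT : IsOpen T) (hST : Disjoint S T) :
    S ⊕ T ≃ₜ ↥(S ∪ T) :=
  have hinj : Function.Injective (Sum.elim ((↑) : S → X) ((↑) : T → X)) :=
    Subtype.val_injective.sumElim Subtype.val_injective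
      fun s t => hST.ne_of_mem s.2 t.2
  have hemb := hS.isOpenEmbedding_subtypeVal.sumElim hT.isOpenEmbedding_subtypeVal hinj
  hemb.isEmbedding.toHomeomorph.trans <| Homeomorph.setCongr <| by
    rw [Set.Sum.elim_range, Subtype.range_coe, Subtype.range_coe]

variable {A B C : Set X}

/-- Reading a pair as the formal difference of its entries, this says
`[C : A] = [B : A] + [C : B]` for `[C : A] := (C \ A, A \ C)`. -/
lemma pairSim_sdiff_trans (hA : IsClopen A) (hB : IsClopen B) (hC : IsClopen C) :
    PairSim ↥(C \ A) ↥(A \ C) (↥(B \ A) ⊕ ↥(C \ B)) (↥(A \ B) ⊕ ↥(B \ C)) := by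
  have hcycle : C \ A ∪ (A \ B ∪ B \ C) = B \ A ∪ C \ B ∪ A \ C := by grind
  have hAB := hA.isOpen.sdiff hB.isClosed
  have hBC := hB.isOpen.sdiff hC.isClosed
  have hCA := hC.isOpen.sdiff hA.isClosed
  have hBA := hB.isOpen.sdiff hA.isClosed
  have hCB := hC.isOpen.sdiff hB.isClosed
  have hAC := hA.isOpen.sdiff hC.isClosed
  let fromLeft := ((Homeomorph.refl ↥(C \ A)).sumCongr
    (sumHomeomorphUnion hAB hBC (by grind))).trans
    (sumHomeomorphUnion hCA (hAB.union hBC) (by grind))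
  let fromRight := ((sumHomeomorphUnion hBA hCB (by grind)).sumCongr
    (Homeomorph.refl ↥(A \ C))).trans
    (sumHomeomorphUnion (hBA.union hCB) hAC (by grind))
  exact ⟨fromLeft.trans ((Homeomorph.setCongr hcycle).trans fromRight.symm)⟩

end PairSim

theorem pair_sim_comp_general {X Y Z : Type*} [TopologicalSpace X] [TopologicalSpace Y]
    [TopologicalSpace Z] {A : Set X} {B : Set Y} {C : Set Z}
    (hA : IsClopen A) (hB : IsClopen B) (hC : IsClopen C) (g : X ≃ₜ Y) (h : Y ≃ₜ Z) :
    PairSim ↥(C \ g.trans h '' A) ↥(A \ g.trans h ⁻¹' C)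
      (↥(B \ g '' A) ⊕ ↥(C \ h '' B)) (↥(A \ g ⁻¹' B) ⊕ ↥(B \ h ⁻¹' C)) := by
  have hpull := pairSim_sdiff_trans hA (hB.preimage g.continuous)
    (hC.preimage (g.trans h).continuous)
  have hcomp (S : Set Z) : g.trans h ⁻¹' S = g ⁻¹' (h ⁻¹' S) := rfl
  refine hpull.congr ((g.trans h).sets ?_) (.refl _)
    ((g.sets ?_).sumCongr ((g.trans h).sets ?_)) ((Homeomorph.refl _).sumCongr (g.sets ?_))
  · rw [Set.preimage_sdiff, (g.trans h).preimage_image]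
  · rw [Set.preimage_sdiff, g.preimage_image]
  · rw [Set.preimage_sdiff, hcomp (h '' B), h.preimage_image]
  · rw [Set.preimage_sdiff, hcomp C]

/-- For all `g, h ∈ G` and every `i ≥ 1`,
`(P_i(hg), Q_i(hg)) ∼ (P_i(g), Q_i(g)) + (P_{π(g)(i)}(h), Q_{π(g)(i)}(h))`,
where the sum of pairs is the pair of topological disjoint unions.
(The composite `hg`, acting by `x ↦ h(g(x))`, is `g.trans h`.) -/
theorem pair_sim_comp (α : Ordinal) (hα : α.card ≤ Cardinal.aleph0)
    (π : (Xsp α ≃ₜ Xsp α) → Equiv.Perm ℕ+) (hπ : IsBlockPerm α π)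
    (g h : Xsp α ≃ₜ Xsp α) (i : ℕ+) :
    PairSim ↥(Pset α π (g.trans h) i) ↥(Qset α π (g.trans h) i)
      (↥(Pset α π g i) ⊕ ↥(Pset α π h (π g i)))
      (↥(Qset α π g i) ⊕ ↥(Qset α π h (π g i))) := by
  rw [Pset, Qset, hπ.trans_apply]
  exact pair_sim_comp_general (isClopen_Ablock _) (isClopen_Ablock _) (isClopen_Ablock _) g h
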